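/- arXiv:2204.10462 — 4 statements merged into one kernel-verified Lean document; each statement's English description precedes it below -/
import Mathlib

section
/- For every θ = (θ₁, θ₂) in the high-frequency set T^H, the quantity χ(θ)/4 = (4 - 2 cos θ₁ - 2 cos θ₂)/4 (the symbol of the Jacobi-preconditioned five-point Laplacian) lies in the closed interval [1/2, 2]. -/
open Real Set

/-- The high-frequency set `T^H`. -/
def TH : Set (ℝ × ℝ) :=
  (Ioc (-(π/2)) (3*π/2) ×ˢ Ioc (-(π/2)) (3*π/2)) \
    (Ioc (-(π/2)) (π/2) ×ˢ Ioc (-(π/2)) (π/2))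

/-- Scaled symbol of the five-point discrete Laplacian. -/
noncomputable def chi (θ : ℝ × ℝ) : ℝ := 4 - 2 * Real.cos θ.1 - 2 * Real.cos θ.2

theorem fst_mem_sdiff_or_snd_mem_sdiff_of_mem_prod_sdiff_prod {α β : Type*} {s s₁ : Set α}
    {t t₁ : Set β} {p : α × β} (hp : p ∈ s ×ˢ t \ s₁ ×ˢ t₁) : p.1 ∈ s \ s₁ ∨ p.2 ∈ t \ t₁ := by
  rw [prod_sdiff_prod] at hp
  exact hp.symm.imp And.left And.right

theorem Ioc_sdiff_Ioc_subset_Ioc {α : Type*} [LinearOrder α] (a b c : α) :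
    Ioc a c \ Ioc a b ⊆ Ioc b c :=
  fun _ hx ↦ ⟨lt_of_not_ge fun hxb ↦ hx.2 ⟨hx.1.1, hxb⟩, hx.1.2⟩

theorem cos_nonpos_of_mem_Icc {x : ℝ} (hx : x ∈ Icc (π / 2) (3 * π / 2)) : cos x ≤ 0 :=
  cos_nonpos_of_pi_div_two_le_of_le hx.1 (by linarith [hx.2])

theorem cos_nonpos_or_cos_nonpos_of_mem_TH {θ : ℝ × ℝ} (hθ : θ ∈ TH) :
    cos θ.1 ≤ 0 ∨ cos θ.2 ≤ 0 := by
  have cos_nonpos {x : ℝ} (hx : x ∈ Ioc (-(π / 2)) (3 * π / 2) \ Ioc (-(π / 2)) (π / 2)) :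
      cos x ≤ 0 :=
    cos_nonpos_of_mem_Icc (Ioc_subset_Icc_self (Ioc_sdiff_Ioc_subset_Ioc _ _ _ hx))
  exact (fst_mem_sdiff_or_snd_mem_sdiff_of_mem_prod_sdiff_prod hθ).imp cos_nonpos cos_nonpos

theorem chi_le_eight (θ : ℝ × ℝ) : chi θ ≤ 8 := by
  unfold chi
  linarith [neg_one_le_cos θ.1, neg_one_le_cos θ.2]

theorem two_le_chi_of_cos_nonpos {θ : ℝ × ℝ} (hθ : cos θ.1 ≤ 0 ∨ cos θ.2 ≤ 0) : 2 ≤ chi θ := by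
  unfold chi
  rcases hθ with hfst | hsnd
  · linarith [cos_le_one θ.2]
  · linarith [cos_le_one θ.1]

theorem stmt_0 : ∀ θ ∈ TH, chi θ / 4 ∈ Set.Icc (1/2 : ℝ) 2 := by
  intro θ hθ
  have lower : 2 ≤ chi θ := two_le_chi_of_cos_nonpos (cos_nonpos_or_cos_nonpos_of_mem_TH hθ)
  have upper : chi θ ≤ 8 := chi_le_eight θ
  constructor <;> linarith
end

section
/- For every real damping parameter ω, the supremum over θ ∈ T^H of |1 - ω·χ(θ)/4| is at least 3/5, and this supremum equals 3/5 if and only if ω = 4/5. In other words, the optimal LFA smoothing factor of the weighted Jacobi relaxation for the five-point Laplacian is 3/5, uniquely attained at ω = 4/5. -/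
open Real Set

/-!
On `TH` at least one of the two cosines is nonpositive, so `chi` ranges between `2`, attained at
`(3π/2, 0)`, and `8`, attained at `(π, π)`. The amplification factor `|1 - (ω/4) x|` is convex in
`x = chi θ`, hence its maximum over `TH` is the larger of its values at `x = 2` and `x = 8`. That
larger value is smallest when `1 - (ω/4) * 2` and `1 - (ω/4) * 8` are opposite numbers, which
happens for `ω/4 = 2 / (2 + 8)`.
-/

section ConvexMaximum

variable {𝕜 β : Type*} [Field 𝕜] [LinearOrder 𝕜] [IsStrictOrderedRing 𝕜]
  [AddCommGroup β] [LinearOrder β] [IsOrderedAddMonoid β] [Module 𝕜 β] [IsStrictOrderedModule 𝕜 β]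

theorem isGreatest_image_of_convexOn_Icc {s : Set 𝕜} {a b : 𝕜} {f : 𝕜 → β}
    (hf : ConvexOn 𝕜 (Icc a b) f) (ha : IsLeast s a) (hb : IsGreatest s b) :
    IsGreatest (f '' s) (max (f a) (f b)) := by
  have hab : a ≤ b := ha.2 hb.1
  constructor
  · rcases max_choice (f a) (f b) with h | h <;> rw [h]
    exacts [mem_image_of_mem f ha.1, mem_image_of_mem f hb.1]
  · rintro _ ⟨x, hx, rfl⟩
    exact hf.le_max_of_mem_Icc (left_mem_Icc.2 hab) (right_mem_Icc.2 hab) ⟨ha.2 hx, hb.2 hx⟩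

end ConvexMaximum

theorem convexOn_abs_one_sub_mul (τ : ℝ) {s : Set ℝ} (hs : Convex ℝ s) :
    ConvexOn ℝ s fun x => |1 - τ * x| := by
  have h := (convexOn_dist (1 : ℝ) convex_univ).comp_linearMap (LinearMap.mulLeft ℝ τ)
  simpa only [Function.comp_def, LinearMap.mulLeft_apply, Real.dist_eq, abs_sub_comm (τ * _)]
    using h.subset (subset_univ s) hs

theorem sSup_image_abs_one_sub_mul {s : Set ℝ} {a b : ℝ} (ha : IsLeast s a)
    (hb : IsGreatest s b) (τ : ℝ) :
    sSup ((fun x => |1 - τ * x|) '' s) = max |1 - τ * a| |1 - τ * b| :=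
  (isGreatest_image_of_convexOn_Icc
    (convexOn_abs_one_sub_mul τ (convex_Icc a b)) ha hb).csSup_eq

section OptimalDamping

variable {𝕜 : Type*} [Field 𝕜] [LinearOrder 𝕜] [IsStrictOrderedRing 𝕜] {a b : 𝕜}

theorem sub_div_add_le_max_abs_one_sub_mul (ha : 0 < a) (hb : 0 < b) (τ : 𝕜) :
    (b - a) / (a + b) ≤ max |1 - τ * a| |1 - τ * b| := by
  set M := max |1 - τ * a| |1 - τ * b|
  have hMa : 1 - τ * a ≤ M := (le_abs_self _).trans (le_max_left _ _)
  have hMb : -(1 - τ * b) ≤ M := (neg_le_abs _).trans (le_max_right _ _)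
  rw [div_le_iff₀ (add_pos ha hb)]
  -- In this convex combination of the two bounds, with weights `b` and `a`, `τ` cancels.
  calc b - a = b * (1 - τ * a) + a * -(1 - τ * b) := by ring
    _ ≤ b * M + a * M := by gcongr
    _ = M * (a + b) := by ring

theorem max_abs_one_sub_mul_eq_iff (ha : 0 < a) (hab : a ≤ b) (τ : 𝕜) :
    max |1 - τ * a| |1 - τ * b| = (b - a) / (a + b) ↔ τ = 2 / (a + b) := by
  have hb : 0 < b := ha.trans_le hab
  have hsum : 0 < a + b := add_pos ha hb
  constructor
  · intro h
    have hτa : 1 - τ * a ≤ (b - a) / (a + b) := h ▸ (le_abs_self _).trans (le_max_left _ _)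
    have hτb : -(1 - τ * b) ≤ (b - a) / (a + b) := h ▸ (neg_le_abs _).trans (le_max_right _ _)
    have lower : 2 / (a + b) * a ≤ τ * a := by
      have : 2 / (a + b) * a = 1 - (b - a) / (a + b) := by field_simp; ring
      linarith
    have upper : τ * b ≤ 2 / (a + b) * b := by
      have : 2 / (a + b) * b = 1 + (b - a) / (a + b) := by field_simp; ring
      linarith
    exact le_antisymm (le_of_mul_le_mul_right upper hb) (le_of_mul_le_mul_right lower ha)
  · rintro rfl
    have left_eq : 1 - 2 / (a + b) * a = (b - a) / (a + b) := by field_simp; ring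
    have right_eq : 1 - 2 / (a + b) * b = -((b - a) / (a + b)) := by field_simp; ring
    rw [left_eq, right_eq, abs_neg, max_self,
      abs_of_nonneg (div_nonneg (sub_nonneg.2 hab) hsum.le)]

end OptimalDamping

theorem mem_TH_iff {θ : ℝ × ℝ} :
    θ ∈ TH ↔ θ.1 ∈ Ioc (-(π / 2)) (3 * π / 2) ∧ θ.2 ∈ Ioc (-(π / 2)) (3 * π / 2) ∧
      (π / 2 < θ.1 ∨ π / 2 < θ.2) := by
  simp only [TH, mem_sdiff, mem_prod, mem_Ioc]
  grind

theorem isLeast_image_chi_TH : IsLeast (chi '' TH) 2 := by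
  constructor
  · have hcos : Real.cos (3 * π / 2) = 0 := by
      rw [show 3 * π / 2 = π / 2 + π by ring, Real.cos_add_pi, Real.cos_pi_div_two, neg_zero]
    refine ⟨(3 * π / 2, 0), mem_TH_iff.2 ?_, ?_⟩
    · simp only [mem_Ioc]
      grind [Real.pi_pos]
    · norm_num [chi, hcos]
  · rintro _ ⟨θ, hθ, rfl⟩
    obtain ⟨h₁, h₂, high | high⟩ := mem_TH_iff.1 hθ
    · have hcos : Real.cos θ.1 ≤ 0 :=
        Real.cos_nonpos_of_pi_div_two_le_of_le high.le (by linarith [h₁.2])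
      unfold chi
      linarith [Real.cos_le_one θ.2]
    · have hcos : Real.cos θ.2 ≤ 0 :=
        Real.cos_nonpos_of_pi_div_two_le_of_le high.le (by linarith [h₂.2])
      unfold chi
      linarith [Real.cos_le_one θ.1]

theorem isGreatest_image_chi_TH : IsGreatest (chi '' TH) 8 := by
  constructor
  · refine ⟨(π, π), mem_TH_iff.2 ?_, ?_⟩
    · simp only [mem_Ioc]
      grind [Real.pi_pos]
    · norm_num [chi]
  · rintro _ ⟨θ, -, rfl⟩
    unfold chi
    linarith [Real.neg_one_le_cos θ.1, Real.neg_one_le_cos θ.2]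

theorem sSup_abs_one_sub_mul_chi_TH (ω : ℝ) :
    sSup ((fun θ => |1 - ω * (chi θ / 4)|) '' TH) = max |1 - ω / 4 * 2| |1 - ω / 4 * 8| := by
  simpa only [image_image, div_mul_eq_mul_div, mul_div_assoc] using
    sSup_image_abs_one_sub_mul isLeast_image_chi_TH isGreatest_image_chi_TH (ω / 4)

theorem stmt_1 (ω : ℝ) :
    3/5 ≤ sSup ((fun θ => |1 - ω * (chi θ / 4)|) '' TH) ∧
      (sSup ((fun θ => |1 - ω * (chi θ / 4)|) '' TH) = 3/5 ↔ ω = 4/5) := by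
  have hrate : (3 / 5 : ℝ) = (8 - 2) / (2 + 8) := by norm_num
  rw [sSup_abs_one_sub_mul_chi_TH, hrate]
  refine ⟨sub_div_add_le_max_abs_one_sub_mul two_pos (by norm_num) (ω / 4), ?_⟩
  rw [max_abs_one_sub_mul_eq_iff two_pos (by norm_num)]
  constructor <;> intro h <;> linarith
end

section
/- For every θ = (θ₁, θ₂) in the high-frequency set T^H, the quantity g_v(θ) = χ(θ)·(7 + 2 cos θ₁ + 2 cos θ₂ + cos θ₁ cos θ₂)/24 lies in the closed interval [3/4, 4/3]. -/
open Real Set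

/-- Scaled symbol of the product of the element-wise Vanka operator and the discrete Laplacian. -/
noncomputable def gv (θ : ℝ × ℝ) : ℝ :=
  chi θ * (7 + 2 * Real.cos θ.1 + 2 * Real.cos θ.2 + Real.cos θ.1 * Real.cos θ.2) / 24

/-!
In the variables `x = cos θ.1`, `y = cos θ.2` the symbol is a symmetric cubic polynomial, and on
the high-frequency set one of the two cosines, say `x`, is nonpositive. The polynomial is concave in
`x`, so its minimum over `x ∈ [-1, 0]` is attained on the edges `x = -1` and `x = 0`, where it is a
quadratic in `y`; the minimum is at `(0, 1)`. For the maximum, `x * y ≤ (x + y) ^ 2 / 4` reduces to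
the diagonal `x = y`, and the remaining cubic in `x + y` is largest at `(-1, -1)`.
-/

section Polynomial

variable {R : Type*} [CommRing R]

/-- The symbol `gv` as a polynomial in the cosines `x`, `y` of the two frequencies, multiplied by
`24` to clear denominators. -/
def vankaPoly (x y : R) : R :=
  (4 - 2 * x - 2 * y) * (7 + 2 * x + 2 * y + x * y)

theorem vankaPoly_comm (x y : R) : vankaPoly x y = vankaPoly y x := by
  unfold vankaPoly
  ring

variable [LinearOrder R] [IsStrictOrderedRing R] {x y : R}

theorem vankaPoly_le (h_lower : -2 ≤ x + y) (h_upper : x + y ≤ 2) : vankaPoly x y ≤ 32 := by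
  have h_cube : 0 ≤ (x + y + 2) ^ 3 := pow_nonneg (by linarith) 3
  have h_diag : 0 ≤ (2 - x - y) * (x - y) ^ 2 := mul_nonneg (by linarith) (sq_nonneg _)
  have h_gap : 0 ≤ 2 * (32 - vankaPoly x y) := calc
    0 ≤ (x + y + 2) ^ 3 + (2 - x - y) * (x - y) ^ 2 := add_nonneg h_cube h_diag
    _ = 2 * (32 - vankaPoly x y) := by
      unfold vankaPoly
      ring
  linarith only [h_gap]

theorem le_vankaPoly_zero (hy_lower : -2 ≤ y) (hy_upper : y ≤ 1) : 18 ≤ vankaPoly 0 y := by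
  have h : 0 ≤ (1 - y) * (5 + 2 * y) := mul_nonneg (by linarith) (by linarith)
  unfold vankaPoly
  linarith only [h]

theorem le_vankaPoly_neg_one (hy_lower : -3 ≤ y) (hy_upper : y ≤ 1) :
    24 ≤ vankaPoly (-1) y := by
  have h : 0 ≤ (1 - y) * (3 + y) := mul_nonneg (by linarith) (by linarith)
  unfold vankaPoly
  linarith only [h]

theorem add_le_vankaPoly_of_nonpos (hx_lower : -1 ≤ x) (hx_upper : x ≤ 0) (hy : -2 ≤ y) :
    (1 + x) * vankaPoly 0 y + -x * vankaPoly (-1) y ≤ vankaPoly x y := by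
  have h_concave : 0 ≤ 2 * (2 + y) * (-x * (1 + x)) :=
    mul_nonneg (by linarith) (mul_nonneg (neg_nonneg.2 hx_upper) (by linarith))
  unfold vankaPoly
  linarith only [h_concave]

theorem le_vankaPoly (hx_lower : -1 ≤ x) (hx_upper : x ≤ 0) (hy_lower : -2 ≤ y)
    (hy_upper : y ≤ 1) : 18 ≤ vankaPoly x y := by
  have h_zero : 18 ≤ vankaPoly 0 y := le_vankaPoly_zero hy_lower hy_upper
  have h_neg_one : 18 ≤ vankaPoly (-1) y := by
    linarith [le_vankaPoly_neg_one (by linarith) hy_upper]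
  have hx_add : 0 ≤ 1 + x := by linarith
  have hx_neg : 0 ≤ -x := neg_nonneg.2 hx_upper
  calc
    18 = (1 + x) * 18 + -x * 18 := by ring
    _ ≤ (1 + x) * vankaPoly 0 y + -x * vankaPoly (-1) y := by gcongr
    _ ≤ vankaPoly x y := add_le_vankaPoly_of_nonpos hx_lower hx_upper hy_lower

end Polynomial

theorem le_vankaPoly_cos {a b : ℝ} (ha : cos a ≤ 0) : 18 ≤ vankaPoly (cos a) (cos b) :=
  le_vankaPoly (neg_one_le_cos a) ha (by linarith [neg_one_le_cos b]) (cos_le_one b)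

theorem gv_eq_vankaPoly_div (θ : ℝ × ℝ) : gv θ = vankaPoly (cos θ.1) (cos θ.2) / 24 :=
  rfl

theorem gv_le_four_thirds (θ : ℝ × ℝ) : gv θ ≤ 4 / 3 := by
  have h : vankaPoly (cos θ.1) (cos θ.2) ≤ 32 :=
    vankaPoly_le (by linarith [neg_one_le_cos θ.1, neg_one_le_cos θ.2])
      (by linarith [cos_le_one θ.1, cos_le_one θ.2])
  rw [gv_eq_vankaPoly_div]
  linarith

theorem three_fourths_le_gv {θ : ℝ × ℝ} (hθ : cos θ.1 ≤ 0 ∨ cos θ.2 ≤ 0) : 3 / 4 ≤ gv θ := by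
  have h : 18 ≤ vankaPoly (cos θ.1) (cos θ.2) := by
    rcases hθ with h₁ | h₂
    · exact le_vankaPoly_cos h₁
    · exact vankaPoly_comm (cos θ.2) (cos θ.1) ▸ le_vankaPoly_cos h₂
  rw [gv_eq_vankaPoly_div]
  linarith

theorem stmt_4_general {θ : ℝ × ℝ} (hθ : cos θ.1 ≤ 0 ∨ cos θ.2 ≤ 0) :
    gv θ ∈ Icc (3 / 4 : ℝ) (4 / 3) :=
  ⟨three_fourths_le_gv hθ, gv_le_four_thirds θ⟩

theorem stmt_4 : ∀ θ ∈ TH, gv θ ∈ Set.Icc (3/4 : ℝ) (4/3) := by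
  exact fun _ hθ ↦ stmt_4_general (cos_nonpos_or_cos_nonpos_of_mem_TH hθ)
end

section
/- Let ε > 0, η > 0, χ > 0, λ > 0, h > 0 be real numbers, set τ = (λ + ε)/λ and c = τh²/λ, and let a, b be real numbers with a² + b² = τ²h²χ. Then for every complex number σ, one has (εχ − σεη)·(σ − 1)·((εχ − σεη)c − (σ − 1)(a² + b²)) = 0 if and only if σ = 1, or σ = χ/η, or σ = (τχ + εχ/λ)/(τχ + εη/λ). In other words, the three eigenvalues of M̃⁻¹L̃ are exactly 1, χ/η, and (τχ + εχ/λ)/(τχ + εη/λ). -/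
/-!
Each factor is affine in `σ`. In the last one, `c = τ * h ^ 2 / lam` and
`a ^ 2 + b ^ 2 = τ ^ 2 * h ^ 2 * χ` share the factor `τ * h ^ 2`; removing it leaves
`(τ * χ + ε * χ / lam) - σ * (τ * χ + ε * η / lam)`, whose root is the third eigenvalue.
-/

section Field

variable {K : Type*} [Field K]

theorem sub_mul_eq_zero_iff_eq_div {p q σ : K} (hq : q ≠ 0) : p - σ * q = 0 ↔ σ = p / q := by
  rw [sub_eq_zero, eq_comm, eq_div_iff hq]

theorem displacement_factor_eq_zero_iff {ε η χ σ : K} (hε : ε ≠ 0) (hη : η ≠ 0) :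
    ε * χ - σ * (ε * η) = 0 ↔ σ = χ / η := by
  rw [sub_mul_eq_zero_iff_eq_div (mul_ne_zero hε hη), mul_div_mul_left _ _ hε]

theorem pressure_factor_eq_mul_sub (ε η χ lam h τ σ : K) :
    (ε * χ - σ * (ε * η)) * (τ * h ^ 2 / lam) - (σ - 1) * (τ ^ 2 * h ^ 2 * χ) =
      τ * h ^ 2 * ((τ * χ + ε * χ / lam) - σ * (τ * χ + ε * η / lam)) := by
  ring

theorem pressure_factor_eq_zero_iff {ε η χ lam h τ σ : K} (hh : h ≠ 0) (hτ : τ ≠ 0)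
    (hden : τ * χ + ε * η / lam ≠ 0) :
    (ε * χ - σ * (ε * η)) * (τ * h ^ 2 / lam) - (σ - 1) * (τ ^ 2 * h ^ 2 * χ) = 0 ↔
      σ = (τ * χ + ε * χ / lam) / (τ * χ + ε * η / lam) := by
  rw [pressure_factor_eq_mul_sub, mul_eq_zero_iff_left (mul_ne_zero hτ (pow_ne_zero 2 hh)),
    sub_mul_eq_zero_iff_eq_div hden]

theorem stmt_16_general {ε η χ lam h a b τ c : K} (hε : ε ≠ 0) (hη : η ≠ 0) (hlam : lam ≠ 0)
    (hh : h ≠ 0) (hsum : lam + ε ≠ 0) (hden : τ * χ + ε * η / lam ≠ 0)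
    (hτ : τ = (lam + ε) / lam) (hc : c = τ * h ^ 2 / lam)
    (hab : a ^ 2 + b ^ 2 = τ ^ 2 * h ^ 2 * χ) (σ : K) :
    (ε * χ - σ * (ε * η)) * (σ - 1) *
        ((ε * χ - σ * (ε * η)) * c - (σ - 1) * (a ^ 2 + b ^ 2)) = 0 ↔
      σ = 1 ∨ σ = χ / η ∨ σ = (τ * χ + ε * χ / lam) / (τ * χ + ε * η / lam) := by
  have hτ_ne : τ ≠ 0 := hτ ▸ div_ne_zero hsum hlam
  rw [hc, hab, mul_eq_zero, mul_eq_zero, displacement_factor_eq_zero_iff hε hη, sub_eq_zero,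
    pressure_factor_eq_zero_iff hh hτ_ne hden, or_comm (a := σ = χ / η), or_assoc]

end Field

theorem stmt_16 (ε η χ lam h a b τ c : ℝ) (hε : 0 < ε) (hη : 0 < η) (hχ : 0 < χ)
    (hlam : 0 < lam) (hh : 0 < h) (hτ : τ = (lam + ε)/lam) (hc : c = τ*h^2/lam)
    (hab : a^2 + b^2 = τ^2*h^2*χ) (σ : ℂ) :
    ((ε*χ : ℂ) - σ*(ε*η)) * (σ - 1) *
        (((ε*χ : ℂ) - σ*(ε*η))*(c : ℂ) - (σ - 1)*((a : ℂ)^2 + (b : ℂ)^2)) = 0 ↔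
      σ = 1 ∨ σ = ((χ/η : ℝ) : ℂ) ∨
        σ = (((τ*χ + ε*χ/lam)/(τ*χ + ε*η/lam) : ℝ) : ℂ) := by
  have hden : τ * χ + ε * η / lam ≠ 0 := by rw [hτ]; positivity
  push_cast
  exact stmt_16_general (h := (h : ℂ)) (mod_cast hε.ne') (mod_cast hη.ne') (mod_cast hlam.ne')
    (mod_cast hh.ne') (mod_cast (add_pos hlam hε).ne') (mod_cast hden) (mod_cast hτ)
    (mod_cast hc) (mod_cast hab) σ
end
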